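/- arXiv:2208.09568 — 11 statements merged into one kernel-verified Lean document; each statement's English description precedes it below -/
import Mathlib

section
/- For every treatment value j : Fin m and outcome value i : Fin n, the probability of the joint event that the potential outcome under treatment j equals i and the observed outcome equals i satisfies the two-sided bound: max{ P(X = j ∧ Y = i), P(Yp j = i) + P(Y = i) − 1 } ≤ P(Yp j = i ∧ Y = i) ≤ min{ P(Yp j = i), P(Y = i) }. (This is Theorem 1 of the paper, bounding the probability of causation P(y_i_{x_j}, y_i) from experimental data P(y_i_{x_j}) and observational data.) -/
open MeasureTheory

/-- Real-valued probability of an event. -/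
noncomputable def pr {Ω : Type*} [MeasurableSpace Ω] (P : Measure Ω) (A : Set Ω) : ℝ :=
  (P A).toReal

section Events

variable {Ω : Type*} [MeasurableSpace Ω] {μ : Measure Ω} {A B : Set Ω}

theorem pr_mono_ae [IsFiniteMeasure μ] (h : A ≤ᵐ[μ] B) : pr μ A ≤ pr μ B :=
  ENNReal.toReal_mono (measure_ne_top μ B) (measure_mono_ae h)

theorem pr_mono [IsFiniteMeasure μ] (h : A ⊆ B) : pr μ A ≤ pr μ B :=
  pr_mono_ae h.eventuallyLE

theorem pr_inter_le_min [IsFiniteMeasure μ] : pr μ (A ∩ B) ≤ min (pr μ A) (pr μ B) :=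
  le_min (pr_mono Set.inter_subset_left) (pr_mono Set.inter_subset_right)

/-- The Fréchet–Bonferroni lower bound. -/
theorem pr_add_pr_sub_pr_univ_le_pr_inter [IsFiniteMeasure μ] (hB : NullMeasurableSet B μ) :
    pr μ A + pr μ B - pr μ Set.univ ≤ pr μ (A ∩ B) := by
  have inclusion_exclusion : pr μ (A ∪ B) + pr μ (A ∩ B) = pr μ A + pr μ B :=
    measureReal_union_add_inter₀ hB
  have union_le : pr μ (A ∪ B) ≤ pr μ Set.univ := pr_mono (Set.subset_univ _)
  linarith

theorem pr_univ [IsProbabilityMeasure μ] : pr μ Set.univ = 1 :=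
  probReal_univ

end Events

section PotentialOutcomes

variable {Ω ι α : Type*} [MeasurableSpace Ω] {P : Measure Ω}
  {X : Ω → ι} {Y : Ω → α} {Yp : ι → Ω → α}

theorem treated_outcome_ae_le_potential_outcome (hconsist : ∀ᵐ ω ∂P, Y ω = Yp (X ω) ω)
    (j : ι) (s : Set α) :
    {ω | X ω = j ∧ Y ω ∈ s} ≤ᵐ[P] {ω | Yp j ω ∈ s ∧ Y ω ∈ s} := by
  filter_upwards [hconsist] with ω hω
  rintro ⟨rfl, hY⟩
  exact ⟨hω ▸ hY, hY⟩

theorem bounds_yixj_yi_general [IsProbabilityMeasure P] [MeasurableSpace α]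
    (hY : AEMeasurable Y P) (hconsist : ∀ᵐ ω ∂P, Y ω = Yp (X ω) ω)
    (j : ι) {s : Set α} (hs : MeasurableSet s) :
    max (pr P {ω | X ω = j ∧ Y ω ∈ s})
        (pr P {ω | Yp j ω ∈ s} + pr P {ω | Y ω ∈ s} - 1)
      ≤ pr P {ω | Yp j ω ∈ s ∧ Y ω ∈ s} ∧
    pr P {ω | Yp j ω ∈ s ∧ Y ω ∈ s}
      ≤ min (pr P {ω | Yp j ω ∈ s}) (pr P {ω | Y ω ∈ s}) := by
  have observational : pr P {ω | X ω = j ∧ Y ω ∈ s} ≤ pr P {ω | Yp j ω ∈ s ∧ Y ω ∈ s} :=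
    pr_mono_ae (treated_outcome_ae_le_potential_outcome hconsist j s)
  have frechet : pr P {ω | Yp j ω ∈ s} + pr P {ω | Y ω ∈ s} - 1 ≤
      pr P {ω | Yp j ω ∈ s ∧ Y ω ∈ s} := by
    rw [← pr_univ (μ := P)]
    exact pr_add_pr_sub_pr_univ_le_pr_inter (hY.nullMeasurable hs)
  exact ⟨max_le observational frechet, pr_inter_le_min⟩

end PotentialOutcomes

/-- Theorem 1: bounds for `P(y_i_{x_j}, y_i)`. -/
theorem bounds_yixj_yi
    {Ω : Type*} [MeasurableSpace Ω] (P : Measure Ω) [IsProbabilityMeasure P]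
    {m n : ℕ} (hm : 0 < m) (hn : 0 < n)
    (X : Ω → Fin m) (Y : Ω → Fin n) (Yp : Fin m → Ω → Fin n)
    (hX : Measurable X) (hY : Measurable Y) (hYp : ∀ j, Measurable (Yp j))
    (hconsist : ∀ ω, Y ω = Yp (X ω) ω)
    (j : Fin m) (i : Fin n) :
    max (pr P {ω | X ω = j ∧ Y ω = i})
        (pr P {ω | Yp j ω = i} + pr P {ω | Y ω = i} - 1)
      ≤ pr P {ω | Yp j ω = i ∧ Y ω = i} ∧
    pr P {ω | Yp j ω = i ∧ Y ω = i}
      ≤ min (pr P {ω | Yp j ω = i}) (pr P {ω | Y ω = i}) :=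
  bounds_yixj_yi_general hY.aemeasurable (.of_forall hconsist) j (measurableSet_singleton i)
end

section
/- For all j : Fin m and i, k : Fin n with i ≠ k: max{ 0, P(Yp j = i) + P(Y = k) − 1, Σ_{p : Fin m, p ≠ j} max{0, P(Yp j = i) + P(X = p ∧ Y = k) − 1 + P(X = j) − P(X = j ∧ Y = i)} } ≤ P(Yp j = i ∧ Y = k) ≤ min{ P(Yp j = i) − P(X = j ∧ Y = i), P(Y = k) − P(X = j ∧ Y = k) }. (This is Theorem 2 of the paper, bounding P(y_i_{x_j}, y_k) for i ≠ k.) -/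
/-!
Cut the sample space along the treatment `X`. On `{X = j}` consistency gives `Y = Yp j`, so
`{Yp j = i} ∩ {X = j} = {X = j, Y = i}`, while `{Yp j = i, Y = k}` does not meet `{X = j}` when
`i ≠ k`; removing `{X = j}` from `{Yp j = i}` and from `{Y = k}` yields the two upper bounds.
For the lower bounds, apply the Fréchet inequality `P A + P B - P C ≤ P (A ∩ B)`, `A ∪ B ⊆ C`, once
in the whole space and once for each `p ≠ j` inside `C = {X ≠ j}`, where `{X = p, Y = k}` lies.
-/

open MeasureTheory

section FiniteMeasure

variable {Ω : Type*} [MeasurableSpace Ω] {μ : Measure Ω} [IsFiniteMeasure μ] {A B C : Set Ω}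

lemma measureReal_add_sub_le_inter_of_subset (hB : MeasurableSet B) (hAC : A ⊆ C) (hBC : B ⊆ C) :
    μ.real A + μ.real B - μ.real C ≤ μ.real (A ∩ B) := by
  have inclusion_exclusion : μ.real (A ∪ B) + μ.real (A ∩ B) = μ.real A + μ.real B :=
    measureReal_union_add_inter hB
  have union_le : μ.real (A ∪ B) ≤ μ.real C := measureReal_mono (Set.union_subset hAC hBC)
  linarith

lemma measureReal_le_sub_inter_of_disjoint (hC : MeasurableSet C) (hAB : A ⊆ B)
    (hAC : Disjoint A C) : μ.real A ≤ μ.real B - μ.real (B ∩ C) :=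
  calc μ.real A
    _ ≤ μ.real (B \ C) := measureReal_mono (Set.subset_sdiff.mpr ⟨hAB, hAC⟩)
    _ = μ.real B - μ.real (B ∩ C) := by
      linarith [measureReal_inter_add_sdiff (μ := μ) (s := B) hC]

lemma measureReal_add_sub_le_inter_of_disjoint (hB : MeasurableSet B) (hC : MeasurableSet C)
    (hBC : Disjoint B C) :
    μ.real A + μ.real B - μ.real Set.univ + μ.real C - μ.real (A ∩ C) ≤ μ.real (A ∩ B) :=
  calc μ.real A + μ.real B - μ.real Set.univ + μ.real C - μ.real (A ∩ C)
    _ = μ.real (A \ C) + μ.real B - μ.real Cᶜ := by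
      linarith [measureReal_inter_add_sdiff (μ := μ) (s := A) hC, measureReal_compl (μ := μ) hC]
    _ ≤ μ.real ((A \ C) ∩ B) :=
      measureReal_add_sub_le_inter_of_subset hB (fun _ hω ↦ hω.2) hBC.subset_compl_right
    _ ≤ μ.real (A ∩ B) := measureReal_mono (Set.inter_subset_inter_left B Set.sdiff_subset)

variable {ι : Type*} {X : Ω → ι} {s : Finset ι}

lemma sum_measureReal_inter_preimage_singleton_le (hX : ∀ p ∈ s, MeasurableSet (X ⁻¹' {p}))
    (A : Set Ω) : ∑ p ∈ s, μ.real (A ∩ X ⁻¹' {p}) ≤ μ.real A :=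
  calc ∑ p ∈ s, μ.real (A ∩ X ⁻¹' {p})
    _ = ∑ p ∈ s, (μ.restrict A).real (X ⁻¹' {p}) := Finset.sum_congr rfl fun p hp ↦ by
      rw [measureReal_restrict_apply (hX p hp), Set.inter_comm]
    _ = (μ.restrict A).real (X ⁻¹' s) := sum_measureReal_preimage_singleton s hX
    _ ≤ (μ.restrict A).real Set.univ := measureReal_mono (Set.subset_univ _)
    _ = μ.real A := measureReal_restrict_apply_univ A

lemma sum_max_measureReal_le_inter {j : ι} (hX : ∀ p ∈ s, MeasurableSet (X ⁻¹' {p}))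
    (hXj : MeasurableSet (X ⁻¹' {j})) (hjs : j ∉ s) (hB : MeasurableSet B) :
    ∑ p ∈ s, max 0 (μ.real A + μ.real (X ⁻¹' {p} ∩ B) - μ.real Set.univ
        + μ.real (X ⁻¹' {j}) - μ.real (A ∩ X ⁻¹' {j})) ≤ μ.real (A ∩ B) := by
  refine (Finset.sum_le_sum fun p hp ↦ max_le measureReal_nonneg ?_).trans
    (sum_measureReal_inter_preimage_singleton_le hX (A ∩ B))
  have fibers_disjoint : Disjoint (X ⁻¹' {p}) (X ⁻¹' {j}) :=
    (Set.disjoint_singleton.mpr (ne_of_mem_of_not_mem hp hjs)).preimage X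
  rw [Set.inter_assoc, Set.inter_comm B]
  exact measureReal_add_sub_le_inter_of_disjoint ((hX p hp).inter hB) hXj
    (fibers_disjoint.mono_left Set.inter_subset_left)

end FiniteMeasure

lemma disjoint_preimage_inter_preimage_of_eqOn {α β : Type*} {f g : α → β} {s : Set α}
    {t u : Set β} (hfg : Set.EqOn f g s) (htu : Disjoint t u) :
    Disjoint (f ⁻¹' t ∩ g ⁻¹' u) s :=
  Set.disjoint_left.mpr fun _ hx hs ↦ Set.disjoint_left.mp htu hx.1 (hfg hs ▸ hx.2)

theorem bounds_yixj_yk_general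
    {Ω ι β : Type*} [MeasurableSpace Ω] (μ : Measure Ω) [IsFiniteMeasure μ]
    [MeasurableSpace ι] [MeasurableSingletonClass ι]
    [MeasurableSpace β] [MeasurableSingletonClass β]
    {X : Ω → ι} {Y Yj : Ω → β} (hX : Measurable X) (hY : Measurable Y)
    {j : ι} (hconsist : Set.EqOn Yj Y {ω | X ω = j})
    {s : Finset ι} (hjs : j ∉ s) {i k : β} (hik : i ≠ k) :
    max (max 0 (μ.real {ω | Yj ω = i} + μ.real {ω | Y ω = k} - μ.real Set.univ))
        (∑ p ∈ s,
          max 0 (μ.real {ω | Yj ω = i} + μ.real {ω | X ω = p ∧ Y ω = k} - μ.real Set.univ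
                  + μ.real {ω | X ω = j} - μ.real {ω | X ω = j ∧ Y ω = i}))
      ≤ μ.real {ω | Yj ω = i ∧ Y ω = k} ∧
    μ.real {ω | Yj ω = i ∧ Y ω = k}
      ≤ min (μ.real {ω | Yj ω = i} - μ.real {ω | X ω = j ∧ Y ω = i})
            (μ.real {ω | Y ω = k} - μ.real {ω | X ω = j ∧ Y ω = k}) := by
  have hXm (p : ι) : MeasurableSet (X ⁻¹' {p}) := hX (measurableSet_singleton p)
  have hYk : MeasurableSet {ω | Y ω = k} := hY (measurableSet_singleton k)
  have observed_eq : {ω | X ω = j ∧ Y ω = i} = {ω | Yj ω = i} ∩ {ω | X ω = j} :=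
    (hconsist.inter_preimage_eq {i}).symm.trans (Set.inter_comm _ _)
  have off_treatment : Disjoint {ω | Yj ω = i ∧ Y ω = k} {ω | X ω = j} :=
    disjoint_preimage_inter_preimage_of_eqOn hconsist (Set.disjoint_singleton.mpr hik)
  refine ⟨max_le (max_le measureReal_nonneg ?_) ?_, le_min ?_ ?_⟩
  · exact measureReal_add_sub_le_inter_of_subset hYk (Set.subset_univ _) (Set.subset_univ _)
  · rw [observed_eq]
    exact sum_max_measureReal_le_inter (fun p _ ↦ hXm p) (hXm j) hjs hYk
  · rw [observed_eq]
    exact measureReal_le_sub_inter_of_disjoint (hXm j) (fun _ hω ↦ hω.1) off_treatment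
  · rw [Set.ext fun ω ↦ and_comm (a := X ω = j) (b := Y ω = k)]
    exact measureReal_le_sub_inter_of_disjoint (hXm j) (fun _ hω ↦ hω.2) off_treatment

/-- Theorem 2: bounds for `P(y_i_{x_j}, y_k)` when `i ≠ k`. -/
theorem bounds_yixj_yk
    {Ω : Type*} [MeasurableSpace Ω] (P : Measure Ω) [IsProbabilityMeasure P]
    {m n : ℕ} (hm : 0 < m) (hn : 0 < n)
    (X : Ω → Fin m) (Y : Ω → Fin n) (Yp : Fin m → Ω → Fin n)
    (hX : Measurable X) (hY : Measurable Y) (hYp : ∀ j, Measurable (Yp j))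
    (hconsist : ∀ ω, Y ω = Yp (X ω) ω)
    (j : Fin m) (i k : Fin n) (hik : i ≠ k) :
    max (max 0 (pr P {ω | Yp j ω = i} + pr P {ω | Y ω = k} - 1))
        (∑ p ∈ Finset.univ.filter (fun p => p ≠ j),
          max 0 (pr P {ω | Yp j ω = i} + pr P {ω | X ω = p ∧ Y ω = k} - 1
                  + pr P {ω | X ω = j} - pr P {ω | X ω = j ∧ Y ω = i}))
      ≤ pr P {ω | Yp j ω = i ∧ Y ω = k} ∧
    pr P {ω | Yp j ω = i ∧ Y ω = k}
      ≤ min (pr P {ω | Yp j ω = i} - pr P {ω | X ω = j ∧ Y ω = i})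
            (pr P {ω | Y ω = k} - pr P {ω | X ω = j ∧ Y ω = k}) := by
  simpa only [pr, ← measureReal_def, probReal_univ] using bounds_yixj_yk_general P hX hY
    (Yj := Yp j) (fun ω hω ↦ by rw [hconsist ω, hω]) (s := Finset.univ.filter (· ≠ j)) (by simp) hik
end

section
/- For all i : Fin n and j, k : Fin m with j ≠ k: max{ 0, P(Yp j = i) − P(X = j ∧ Y = i) − 1 + P(X = j) + P(X = k) } ≤ P(Yp j = i ∧ X = k) ≤ min{ P(Yp j = i) − P(X = j ∧ Y = i), P(X = k) }. (This is Theorem 3 of the paper, bounding P(y_i_{x_j}, x_k) for j ≠ k.) -/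
open MeasureTheory

/-! The bounds are the Fréchet inequalities for two events inside `{X ≠ j}`. By consistency the
events `Yp j = i` and `Y = i` coincide on `X = j`, so `B = {Yp j = i, X ≠ j}` has probability
`P(Yp j = i) - P(X = j, Y = i)`. For `k ≠ j` both `B` and `K = {X = k}` lie in `{X ≠ j}`, which has
probability `1 - P(X = j)`, and `B ∩ K = {Yp j = i, X = k}`. -/

section Frechet

variable {Ω : Type*} [MeasurableSpace Ω] {μ : Measure Ω} [IsFiniteMeasure μ] {A B S : Set Ω}

theorem measureReal_inter_le_min : μ.real (A ∩ B) ≤ min (μ.real A) (μ.real B) :=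
  le_min (measureReal_mono Set.inter_subset_left) (measureReal_mono Set.inter_subset_right)

theorem max_le_measureReal_inter (hA : A ⊆ S) (hB : B ⊆ S) (hBm : MeasurableSet B) :
    max 0 (μ.real A + μ.real B - μ.real S) ≤ μ.real (A ∩ B) := by
  have h_union : μ.real (A ∪ B) ≤ μ.real S := measureReal_mono (Set.union_subset hA hB)
  have h_incl_excl : μ.real (A ∪ B) + μ.real (A ∩ B) = μ.real A + μ.real B :=
    measureReal_union_add_inter hBm
  exact max_le measureReal_nonneg (by linarith)

end Frechet

section PotentialOutcomes

variable {Ω α β : Type*} {X : Ω → α} {Y : Ω → β} {Yp : α → Ω → β}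

theorem setOf_treatment_and_outcome_eq_inter (hconsist : ∀ ω, Y ω = Yp (X ω) ω) (j : α) (i : β) :
    {ω | X ω = j ∧ Y ω = i} = {ω | Yp j ω = i} ∩ {ω | X ω = j} := by
  ext ω
  constructor
  · rintro ⟨rfl, hY⟩
    exact ⟨(hconsist ω).symm.trans hY, rfl⟩
  · rintro ⟨hYp, rfl⟩
    exact ⟨rfl, (hconsist ω).trans hYp⟩

theorem pr_potentialOutcome_sdiff_treatment [MeasurableSpace Ω] {P : Measure Ω} [IsFiniteMeasure P]
    (hconsist : ∀ ω, Y ω = Yp (X ω) ω) {j : α} (hj : MeasurableSet {ω | X ω = j}) (i : β) :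
    pr P ({ω | Yp j ω = i} \ {ω | X ω = j}) =
      pr P {ω | Yp j ω = i} - pr P {ω | X ω = j ∧ Y ω = i} := by
  rw [setOf_treatment_and_outcome_eq_inter hconsist]
  exact eq_sub_of_add_eq' (measureReal_inter_add_sdiff hj)

theorem bounds_yixj_xk_general [MeasurableSpace Ω] (P : Measure Ω) [IsProbabilityMeasure P]
    [MeasurableSpace α] [MeasurableSingletonClass α] (hX : Measurable X)
    (hconsist : ∀ ω, Y ω = Yp (X ω) ω) (i : β) {j k : α} (hjk : j ≠ k) :
    max 0 (pr P {ω | Yp j ω = i} - pr P {ω | X ω = j ∧ Y ω = i} - 1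
            + pr P {ω | X ω = j} + pr P {ω | X ω = k})
      ≤ pr P {ω | Yp j ω = i ∧ X ω = k} ∧
    pr P {ω | Yp j ω = i ∧ X ω = k}
      ≤ min (pr P {ω | Yp j ω = i} - pr P {ω | X ω = j ∧ Y ω = i})
            (pr P {ω | X ω = k}) := by
  set J : Set Ω := {ω | X ω = j}
  set K : Set Ω := {ω | X ω = k}
  set B : Set Ω := {ω | Yp j ω = i} \ J
  have hJ : MeasurableSet J := hX (measurableSet_singleton j)
  have hK : MeasurableSet K := hX (measurableSet_singleton k)
  have hKJ : K ⊆ Jᶜ := fun _ hk hj => hjk (hj.symm.trans hk)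
  have hBK : {ω | Yp j ω = i ∧ X ω = k} = B ∩ K :=
    Set.ext fun _ => ⟨fun h => ⟨⟨h.1, hKJ h.2⟩, h.2⟩, fun h => ⟨h.1.1, h.2⟩⟩
  rw [hBK, ← pr_potentialOutcome_sdiff_treatment hconsist hJ]
  refine ⟨?_, measureReal_inter_le_min⟩
  calc max 0 (P.real B - 1 + P.real J + P.real K)
      = max 0 (P.real B + P.real K - P.real Jᶜ) := by
        rw [probReal_compl_eq_one_sub hJ]
        congr 1
        ring
    _ ≤ P.real (B ∩ K) := max_le_measureReal_inter (Set.sdiff_subset_compl _ _) hKJ hK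

end PotentialOutcomes

/-- Theorem 3: bounds for `P(y_i_{x_j}, x_k)` when `j ≠ k`. -/
theorem bounds_yixj_xk
    {Ω : Type*} [MeasurableSpace Ω] (P : Measure Ω) [IsProbabilityMeasure P]
    {m n : ℕ} (hm : 0 < m) (hn : 0 < n)
    (X : Ω → Fin m) (Y : Ω → Fin n) (Yp : Fin m → Ω → Fin n)
    (hX : Measurable X) (hY : Measurable Y) (hYp : ∀ j, Measurable (Yp j))
    (hconsist : ∀ ω, Y ω = Yp (X ω) ω)
    (i : Fin n) (j k : Fin m) (hjk : j ≠ k) :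
    max 0 (pr P {ω | Yp j ω = i} - pr P {ω | X ω = j ∧ Y ω = i} - 1
            + pr P {ω | X ω = j} + pr P {ω | X ω = k})
      ≤ pr P {ω | Yp j ω = i ∧ X ω = k} ∧
    pr P {ω | Yp j ω = i ∧ X ω = k}
      ≤ min (pr P {ω | Yp j ω = i} - pr P {ω | X ω = j ∧ Y ω = i})
            (pr P {ω | X ω = k}) :=
  bounds_yixj_xk_general P hX hconsist i hjk
end

section
/- For all i, k : Fin n and j, p : Fin m with j ≠ p: max{ 0, P(Yp j = i) + P(X = p ∧ Y = k) − 1 + P(X = j) − P(X = j ∧ Y = i) } ≤ P(Yp j = i ∧ Y = k ∧ X = p) ≤ min{ P(Yp j = i) − P(X = j ∧ Y = i), P(X = p ∧ Y = k) }. (This is Theorem 4 of the paper, bounding P(y_i_{x_j}, y_k, x_p) for j ≠ p; the paper notes it is the general form of the probabilities of necessity and of sufficiency.) -/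
/-!
On the event `X = j` the potential outcome under `j` is the observed one, so
`P(Yp j = i, X ≠ j) = P(Yp j = i) - P(X = j, Y = i)`. Since `j ≠ p`, the event to be bounded is the
intersection of `{Yp j = i, X ≠ j}` and `{X = p, Y = k}`, both of which lie in `{X ≠ j}`; the bounds
are the Fréchet bounds for this intersection, relative to `{X ≠ j}`.
-/

open MeasureTheory

open scoped ENNReal

theorem measureReal_add_sub_le_measureReal_inter {Ω : Type*} [MeasurableSpace Ω] {μ : Measure Ω}
    {s t u : Set Ω} (ht : NullMeasurableSet t μ) (hsu : s ⊆ u) (htu : t ⊆ u)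
    (hu : μ u ≠ ∞ := by finiteness) :
    μ.real s + μ.real t - μ.real u ≤ μ.real (s ∩ t) := by
  have hunion : μ.real (s ∪ t) ≤ μ.real u := measureReal_mono (Set.union_subset hsu htu) hu
  have hincl_excl : μ.real (s ∪ t) + μ.real (s ∩ t) = μ.real s + μ.real t :=
    measureReal_union_add_inter₀ ht (measure_ne_top_of_subset hsu hu)
      (measure_ne_top_of_subset htu hu)
  linarith

section PotentialOutcomes

variable {Ω α β : Type*} [MeasurableSpace Ω] {X : Ω → α} {Y Yj : Ω → β} {j : α}

theorem measureReal_potential_treated_eq_observed {μ : Measure Ω}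
    (hconsist : ∀ᵐ ω ∂μ, X ω = j → Y ω = Yj ω) (i : β) :
    μ.real {ω | Yj ω = i ∧ X ω = j} = μ.real {ω | X ω = j ∧ Y ω = i} := by
  refine measureReal_congr (Filter.eventuallyEq_set.2 ?_)
  filter_upwards [hconsist] with ω hω
  constructor
  · rintro ⟨hi, hj⟩
    exact ⟨hj, (hω hj).trans hi⟩
  · rintro ⟨hj, hi⟩
    exact ⟨(hω hj).symm.trans hi, hj⟩

theorem measureReal_potential_untreated_eq_sub {μ : Measure Ω}
    (hj : NullMeasurableSet {ω | X ω = j} μ) (hconsist : ∀ᵐ ω ∂μ, X ω = j → Y ω = Yj ω) (i : β)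
    (hi : μ {ω | Yj ω = i} ≠ ∞ := by finiteness) :
    μ.real {ω | Yj ω = i ∧ X ω ≠ j}
      = μ.real {ω | Yj ω = i} - μ.real {ω | X ω = j ∧ Y ω = i} := by
  rw [← measureReal_potential_treated_eq_observed hconsist]
  exact eq_sub_of_add_eq' (measureReal_inter_add_sdiff₀ hj hi)

theorem bounds_yixj_yk_xp_general [MeasurableSpace α] [MeasurableSingletonClass α]
    [MeasurableSpace β] [MeasurableSingletonClass β] {P : Measure Ω} [IsProbabilityMeasure P]
    (hX : AEMeasurable X P) (hY : AEMeasurable Y P)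
    (hconsist : ∀ᵐ ω ∂P, X ω = j → Y ω = Yj ω) (i k : β) {p : α} (hjp : j ≠ p) :
    max 0 (P.real {ω | Yj ω = i} + P.real {ω | X ω = p ∧ Y ω = k} - 1
            + P.real {ω | X ω = j} - P.real {ω | X ω = j ∧ Y ω = i})
      ≤ P.real {ω | Yj ω = i ∧ Y ω = k ∧ X ω = p} ∧
    P.real {ω | Yj ω = i ∧ Y ω = k ∧ X ω = p}
      ≤ min (P.real {ω | Yj ω = i} - P.real {ω | X ω = j ∧ Y ω = i})
            (P.real {ω | X ω = p ∧ Y ω = k}) := by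
  have hXj : NullMeasurableSet {ω | X ω = j} P := hX.nullMeasurable (measurableSet_singleton j)
  have hXpYk : NullMeasurableSet {ω | X ω = p ∧ Y ω = k} P :=
    (hX.nullMeasurable (measurableSet_singleton p)).inter
      (hY.nullMeasurable (measurableSet_singleton k))
  have htarget : {ω | Yj ω = i ∧ Y ω = k ∧ X ω = p}
      = {ω | Yj ω = i ∧ X ω ≠ j} ∩ {ω | X ω = p ∧ Y ω = k} :=
    Set.ext fun _ ↦
      ⟨fun ⟨hi, hk, hp⟩ ↦ ⟨⟨hi, hp.trans_ne hjp.symm⟩, hp, hk⟩,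
        fun ⟨⟨hi, _⟩, hp, hk⟩ ↦ ⟨hi, hk, hp⟩⟩
  have hcompl : P.real {ω | X ω ≠ j} = 1 - P.real {ω | X ω = j} :=
    probReal_compl_eq_one_sub₀ hXj
  have hpotential := measureReal_potential_untreated_eq_sub hXj hconsist i
  have hlower := measureReal_add_sub_le_measureReal_inter (s := {ω | Yj ω = i ∧ X ω ≠ j})
    (u := {ω | X ω ≠ j}) hXpYk (fun _ hω ↦ hω.2) (fun _ hω ↦ hω.1.trans_ne hjp.symm)
  rw [htarget, ← hpotential]
  exact ⟨max_le measureReal_nonneg (by linarith),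
    le_min (measureReal_mono Set.inter_subset_left) (measureReal_mono Set.inter_subset_right)⟩

end PotentialOutcomes

/-- Theorem 4: bounds for `P(y_i_{x_j}, y_k, x_p)` when `j ≠ p`. -/
theorem bounds_yixj_yk_xp
    {Ω : Type*} [MeasurableSpace Ω] (P : Measure Ω) [IsProbabilityMeasure P]
    {m n : ℕ} (hm : 0 < m) (hn : 0 < n)
    (X : Ω → Fin m) (Y : Ω → Fin n) (Yp : Fin m → Ω → Fin n)
    (hX : Measurable X) (hY : Measurable Y) (hYp : ∀ j, Measurable (Yp j))
    (hconsist : ∀ ω, Y ω = Yp (X ω) ω)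
    (i k : Fin n) (j p : Fin m) (hjp : j ≠ p) :
    max 0 (pr P {ω | Yp j ω = i} + pr P {ω | X ω = p ∧ Y ω = k} - 1
            + pr P {ω | X ω = j} - pr P {ω | X ω = j ∧ Y ω = i})
      ≤ pr P {ω | Yp j ω = i ∧ Y ω = k ∧ X ω = p} ∧
    pr P {ω | Yp j ω = i ∧ Y ω = k ∧ X ω = p}
      ≤ min (pr P {ω | Yp j ω = i} - pr P {ω | X ω = j ∧ Y ω = i})
            (pr P {ω | X ω = p ∧ Y ω = k}) :=
  bounds_yixj_yk_xp_general hX.aemeasurable hY.aemeasurable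
    (.of_forall fun ω hω ↦ by rw [hconsist, hω]) i k hjp
end

section
/- Let k ≥ 1, let j : Fin k → Fin m be injective and i : Fin k → Fin n, and write J for the event ⋂_{t : Fin k} {Yp (j t) = i t}. Suppose real numbers are given such that for each t : Fin k, L t ≤ P(⋂_{s ≠ t} {Yp (j s) = i s}) ≤ U t; for each r : Fin k, A r ≤ P((⋂_{s ≠ r} {Yp (j s) = i s}) ∧ X = j r ∧ Y = i r) ≤ B r; and for each p : Fin m outside the range of j, C p ≤ P(J ∧ X = p) ≤ D p. Then max{ 0, (Σ_t P(Yp (j t) = i t)) − k + 1, max_t (L t + P(Yp (j t) = i t) − 1), Σ_r A r + Σ_{p ∉ range j} C p } ≤ P(J) ≤ min{ min_t P(Yp (j t) = i t), min_t U t, Σ_r B r + Σ_{p ∉ range j} D p }. (This is Theorem 5 of the paper, bounding P(y_{i_1}_{x_{j_1}}, …, y_{i_k}_{x_{j_k}}) in terms of any valid lower/upper bounds of the lower-order probabilities of causation; it is the general form of PNS.) -/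
open MeasureTheory

/-!
The joint event `J` splits along the value of the treatment `X`. Where `X = j r`, consistency turns
the constraint `Yp (j r) = i r` into the observable `Y = i r`, so those parts of `J` are the ones
estimated by `A r` and `B r`; the parts with `X` outside the range of `j` are estimated by `C` and
`D`. The other bounds are Fréchet's inequality `P(S) + P(T) - 1 ≤ P(S ∩ T)`, its iterate, and
monotonicity of `P`.
-/

section Probability

variable {Ω ι α : Type*} [MeasurableSpace Ω] {μ : Measure Ω}

lemma measureReal_add_measureReal_sub_one_le_inter [IsProbabilityMeasure μ] (s : Set Ω)
    {t : Set Ω} (ht : MeasurableSet t) : μ.real s + μ.real t - 1 ≤ μ.real (s ∩ t) := by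
  have hunion : μ.real (s ∪ t) ≤ 1 := measureReal_le_one
  linarith [measureReal_union_add_inter (μ := μ) (s := s) ht]

lemma measureReal_forall_ne_add_measureReal_sub_one_le [IsProbabilityMeasure μ]
    {p : ι → Ω → Prop} {t : ι} (ht : MeasurableSet {ω | p t ω}) :
    μ.real {ω | ∀ s, s ≠ t → p s ω} + μ.real {ω | p t ω} - 1 ≤ μ.real {ω | ∀ s, p s ω} := by
  have hsplit : {ω | ∀ s, p s ω} = {ω | ∀ s, s ≠ t → p s ω} ∩ {ω | p t ω} := by
    ext ω
    exact (and_forall_ne t).symm.trans and_comm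
  rw [hsplit]
  exact measureReal_add_measureReal_sub_one_le_inter _ ht

lemma sum_measureReal_sub_card_add_one_le_biInter [IsProbabilityMeasure μ] (s : Finset ι)
    {E : ι → Set Ω} (hE : ∀ t ∈ s, MeasurableSet (E t)) :
    ∑ t ∈ s, μ.real (E t) - (s.card : ℝ) + 1 ≤ μ.real (⋂ t ∈ s, E t) := by
  classical
  induction s using Finset.induction_on with
  | empty => simp
  | insert a s ha ih =>
    have hrest := ih fun t ht => hE t (Finset.mem_insert_of_mem ht)
    have hinter := measureReal_add_measureReal_sub_one_le_inter (μ := μ) (⋂ t ∈ s, E t)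
      (hE a (Finset.mem_insert_self a s))
    rw [Finset.sum_insert ha, Finset.card_insert_of_notMem ha, Finset.set_biInter_insert,
      Set.inter_comm]
    push_cast
    linarith

lemma measureReal_eq_sum_inter_preimage_singleton [IsFiniteMeasure μ] [Fintype α] {X : Ω → α}
    (hX : ∀ a, MeasurableSet (X ⁻¹' {a})) (s : Set Ω) :
    μ.real s = ∑ a, μ.real (s ∩ X ⁻¹' {a}) := by
  have htotal := sum_measureReal_preimage_singleton (μ := μ.restrict s) Finset.univ
    fun a _ => hX a
  simpa only [measureReal_restrict_apply (hX _), Finset.coe_univ, Set.preimage_univ,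
    measureReal_restrict_apply_univ, Set.inter_comm] using htotal.symm

end Probability

lemma sum_eq_sum_comp_add_sum_filter_ne {ι α M : Type*} [Fintype ι] [Fintype α] [AddCommMonoid M]
    {j : ι → α} [DecidablePred fun a => ∀ t, j t ≠ a] (hj : Function.Injective j) (f : α → M) :
    ∑ a, f a = ∑ r, f (j r) + ∑ a ∈ Finset.univ.filter (fun a => ∀ t, j t ≠ a), f a := by
  classical
  have hrange : Finset.univ.filter (fun a => ¬ ∀ t, j t ≠ a) = Finset.univ.image j := by
    ext a
    simp
  rw [← Finset.sum_filter_not_add_sum_filter Finset.univ (fun a => ∀ t, j t ≠ a), hrange,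
    Finset.sum_image hj.injOn]

section PotentialOutcomes

variable {Ω ι α β : Type*} {X : Ω → α} {Y : Ω → β} {Yp : α → Ω → β}

lemma joint_inter_treatment_eq (hconsist : ∀ ω, Y ω = Yp (X ω) ω) (j : ι → α) (i : ι → β)
    (r : ι) :
    {ω | ∀ t, Yp (j t) ω = i t} ∩ X ⁻¹' {j r} =
      {ω | (∀ s, s ≠ r → Yp (j s) ω = i s) ∧ X ω = j r ∧ Y ω = i r} := by
  ext ω
  have hobserved (hω : X ω = j r) : Yp (j r) ω = i r ↔ Y ω = i r := by rw [hconsist ω, hω]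
  simp only [Set.mem_inter_iff, Set.mem_ofPred_eq, Set.mem_preimage, Set.mem_singleton_iff,
    ← and_forall_ne (p := fun t => Yp (j t) ω = i t) r]
  tauto

variable [MeasurableSpace Ω] {μ : Measure Ω} [Fintype ι] [Fintype α]

lemma measureReal_joint_eq_sum_add_sum [IsFiniteMeasure μ]
    (hX : ∀ p, MeasurableSet (X ⁻¹' {p})) (hconsist : ∀ ω, Y ω = Yp (X ω) ω)
    {j : ι → α} [DecidablePred fun p => ∀ t, j t ≠ p] (hj : Function.Injective j) (i : ι → β) :
    μ.real {ω | ∀ t, Yp (j t) ω = i t} =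
      ∑ r, μ.real {ω | (∀ s, s ≠ r → Yp (j s) ω = i s) ∧ X ω = j r ∧ Y ω = i r} +
      ∑ p ∈ Finset.univ.filter (fun p => ∀ t, j t ≠ p),
        μ.real {ω | (∀ t, Yp (j t) ω = i t) ∧ X ω = p} := by
  rw [measureReal_eq_sum_inter_preimage_singleton hX, sum_eq_sum_comp_add_sum_filter_ne hj]
  simp only [joint_inter_treatment_eq hconsist]
  rfl

theorem bounds_multi_general [IsProbabilityMeasure μ] [Nonempty ι]
    (hX : ∀ p, MeasurableSet (X ⁻¹' {p})) (hconsist : ∀ ω, Y ω = Yp (X ω) ω)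
    {j : ι → α} [DecidablePred fun p => ∀ t, j t ≠ p] (hj : Function.Injective j) {i : ι → β}
    (hYp : ∀ t, MeasurableSet {ω | Yp (j t) ω = i t})
    {L U A B : ι → ℝ} {C D : α → ℝ}
    (hL : ∀ t, L t ≤ μ.real {ω | ∀ s, s ≠ t → Yp (j s) ω = i s})
    (hU : ∀ t, μ.real {ω | ∀ s, s ≠ t → Yp (j s) ω = i s} ≤ U t)
    (hA : ∀ r, A r ≤ μ.real {ω | (∀ s, s ≠ r → Yp (j s) ω = i s) ∧ X ω = j r ∧ Y ω = i r})
    (hB : ∀ r, μ.real {ω | (∀ s, s ≠ r → Yp (j s) ω = i s) ∧ X ω = j r ∧ Y ω = i r} ≤ B r)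
    (hC : ∀ p, p ∉ Set.range j → C p ≤ μ.real {ω | (∀ t, Yp (j t) ω = i t) ∧ X ω = p})
    (hD : ∀ p, p ∉ Set.range j → μ.real {ω | (∀ t, Yp (j t) ω = i t) ∧ X ω = p} ≤ D p) :
    max (max 0 ((∑ t, μ.real {ω | Yp (j t) ω = i t}) - (Fintype.card ι : ℝ) + 1))
        (max (⨆ t, (L t + μ.real {ω | Yp (j t) ω = i t} - 1))
             ((∑ r, A r) + ∑ p ∈ Finset.univ.filter (fun p => ∀ t, j t ≠ p), C p))
      ≤ μ.real {ω | ∀ t, Yp (j t) ω = i t} ∧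
    μ.real {ω | ∀ t, Yp (j t) ω = i t}
      ≤ min (min (⨅ t, μ.real {ω | Yp (j t) ω = i t}) (⨅ t, U t))
            ((∑ r, B r) + ∑ p ∈ Finset.univ.filter (fun p => ∀ t, j t ≠ p), D p) := by
  have hdecomp := measureReal_joint_eq_sum_add_sum (μ := μ) hX hconsist hj i
  have hnotMem {p : α} (hp : p ∈ Finset.univ.filter fun p => ∀ t, j t ≠ p) : p ∉ Set.range j := by
    simpa using hp
  refine ⟨max_le (max_le measureReal_nonneg ?_) (max_le (ciSup_le fun t => ?_) ?_),
    le_min (le_min (le_ciInf fun t => ?_) (le_ciInf fun t => ?_)) ?_⟩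
  · simpa [Set.ofPred_forall] using
      sum_measureReal_sub_card_add_one_le_biInter (μ := μ) Finset.univ fun t _ => hYp t
  · linarith [hL t, measureReal_forall_ne_add_measureReal_sub_one_le (μ := μ)
      (p := fun s ω => Yp (j s) ω = i s) (hYp t)]
  · rw [hdecomp]
    gcongr with r _ p hp
    exacts [hA r, hC p (hnotMem hp)]
  · exact measureReal_mono fun ω hω => hω t
  · exact (hU t).trans' (measureReal_mono fun ω hω s _ => hω s)
  · rw [hdecomp]
    gcongr with r _ p hp
    exacts [hB r, hD p (hnotMem hp)]

end PotentialOutcomes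

/-- Theorem 5: bounds for `P(y_{i_1}_{x_{j_1}}, …, y_{i_k}_{x_{j_k}})`. -/
theorem bounds_multi
    {Ω : Type*} [MeasurableSpace Ω] (P : Measure Ω) [IsProbabilityMeasure P]
    {m n : ℕ} (hm : 0 < m) (hn : 0 < n)
    (X : Ω → Fin m) (Y : Ω → Fin n) (Yp : Fin m → Ω → Fin n)
    (hX : Measurable X) (hY : Measurable Y) (hYp : ∀ j, Measurable (Yp j))
    (hconsist : ∀ ω, Y ω = Yp (X ω) ω)
    {k : ℕ} (hk : 1 ≤ k) (j : Fin k → Fin m) (hj : Function.Injective j)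
    (i : Fin k → Fin n)
    (L U A B : Fin k → ℝ) (C D : Fin m → ℝ)
    (hL : ∀ t, L t ≤ pr P {ω | ∀ s, s ≠ t → Yp (j s) ω = i s})
    (hU : ∀ t, pr P {ω | ∀ s, s ≠ t → Yp (j s) ω = i s} ≤ U t)
    (hA : ∀ r, A r ≤ pr P {ω | (∀ s, s ≠ r → Yp (j s) ω = i s) ∧ X ω = j r ∧ Y ω = i r})
    (hB : ∀ r, pr P {ω | (∀ s, s ≠ r → Yp (j s) ω = i s) ∧ X ω = j r ∧ Y ω = i r} ≤ B r)
    (hC : ∀ p, p ∉ Set.range j → C p ≤ pr P {ω | (∀ t, Yp (j t) ω = i t) ∧ X ω = p})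
    (hD : ∀ p, p ∉ Set.range j → pr P {ω | (∀ t, Yp (j t) ω = i t) ∧ X ω = p} ≤ D p) :
    max (max 0 ((∑ t, pr P {ω | Yp (j t) ω = i t}) - (k : ℝ) + 1))
        (max (⨆ t, (L t + pr P {ω | Yp (j t) ω = i t} - 1))
             ((∑ r, A r) + ∑ p ∈ Finset.univ.filter (fun p => ∀ t, j t ≠ p), C p))
      ≤ pr P {ω | ∀ t, Yp (j t) ω = i t} ∧
    pr P {ω | ∀ t, Yp (j t) ω = i t}
      ≤ min (min (⨅ t, pr P {ω | Yp (j t) ω = i t}) (⨅ t, U t))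
            ((∑ r, B r) + ∑ p ∈ Finset.univ.filter (fun p => ∀ t, j t ≠ p), D p) := by
  have : Nonempty (Fin k) := ⟨⟨0, hk⟩⟩
  simpa only [pr, Measure.real, Fintype.card_fin] using bounds_multi_general (μ := P)
    (fun p => hX (measurableSet_singleton p)) hconsist hj
    (fun t => hYp (j t) (measurableSet_singleton (i t))) hL hU hA hB hC hD
end

section
/- Let k ≥ 1, let j : Fin k → Fin m be injective, i : Fin k → Fin n, and let p₀ : Fin m lie outside the range of j; write J for the event ⋂_{t : Fin k} {Yp (j t) = i t}. Suppose real numbers are given such that for each t : Fin k, L t ≤ P(⋂_{s ≠ t} {Yp (j s) = i s}) ≤ U t and E t ≤ P(Yp (j t) = i t ∧ X = p₀) ≤ F t. Then max{ 0, (Σ_t P(Yp (j t) = i t)) + P(X = p₀) − k, max_t (L t + E t − 1) } ≤ P(J ∧ X = p₀) ≤ min{ min_t P(Yp (j t) = i t), P(X = p₀), min_t U t, min_t F t }. (This is Theorem 6 of the paper, bounding P(y_{i_1}_{x_{j_1}}, …, y_{i_k}_{x_{j_k}}, x_p).) -/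
/-!
These are Fréchet inequalities for the events `A t = {Yp (j t) = i t}` and `B = {X = p₀}`. The upper
bounds are monotonicity of the probability. The lower bounds rest on `P C + P D ≤ P (C ∩ D) + 1`,
applied to the two splittings `(⋂ t, A t) ∩ B` and `(⋂ s ≠ t, A s) ∩ (A t ∩ B)` of the joint event;
the first is combined with the union bound for the complements `(A t)ᶜ`.
-/

open MeasureTheory

theorem iInter_ne_inter_inter {Ω ι : Type*} (A : ι → Set Ω) (B : Set Ω) (t : ι) :
    (⋂ s ≠ t, A s) ∩ (A t ∩ B) = (⋂ s, A s) ∩ B := by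
  have split : ⋂ s, A s = A t ∩ ⋂ s ≠ t, A s := iInf_split_single A t
  rw [split, ← Set.inter_assoc, Set.inter_comm (A t)]

section Frechet

variable {Ω ι : Type*} [MeasurableSpace Ω] {μ : Measure Ω}

theorem measureReal_add_le_inter_add_univ [IsFiniteMeasure μ] {A : Set Ω}
    (hA : NullMeasurableSet A μ) (B : Set Ω) :
    μ.real A + μ.real B ≤ μ.real (A ∩ B) + μ.real Set.univ :=
  calc μ.real A + μ.real B
      = μ.real (A ∩ B) + μ.real (A ∪ B) := by
        rw [← measureReal_union_add_inter₀' hA, add_comm]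
    _ ≤ μ.real (A ∩ B) + μ.real Set.univ :=
        add_le_add le_rfl (measureReal_mono (Set.subset_univ _))

theorem sum_measureReal_add_univ_le_iInter [IsFiniteMeasure μ] [Fintype ι] {A : ι → Set Ω}
    (hA : ∀ t, NullMeasurableSet (A t) μ) :
    ∑ t, μ.real (A t) + μ.real Set.univ
      ≤ μ.real (⋂ t, A t) + Fintype.card ι * μ.real Set.univ := by
  have union_bound : μ.real (⋂ t, A t)ᶜ ≤ ∑ t, μ.real (A t)ᶜ := by
    rw [Set.compl_iInter]
    exact measureReal_iUnion_fintype_le _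
  simp only [measureReal_compl₀ (.iInter hA), measureReal_compl₀ (hA _), Finset.sum_sub_distrib,
    Finset.sum_const, Finset.card_univ, nsmul_eq_mul] at union_bound
  linarith

end Frechet

theorem bounds_multi_xp_general {Ω ι : Type*} [MeasurableSpace Ω] [Fintype ι] [Nonempty ι]
    (P : Measure Ω) [IsProbabilityMeasure P] {A : ι → Set Ω}
    (hA : ∀ t, NullMeasurableSet (A t) P) (B : Set Ω) {L U E F : ι → ℝ}
    (hL : ∀ t, L t ≤ P.real (⋂ s ≠ t, A s)) (hU : ∀ t, P.real (⋂ s ≠ t, A s) ≤ U t)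
    (hE : ∀ t, E t ≤ P.real (A t ∩ B)) (hF : ∀ t, P.real (A t ∩ B) ≤ F t) :
    max (max 0 (∑ t, P.real (A t) + P.real B - Fintype.card ι)) (⨆ t, (L t + E t - 1))
      ≤ P.real ((⋂ t, A t) ∩ B) ∧
    P.real ((⋂ t, A t) ∩ B)
      ≤ min (min (⨅ t, P.real (A t)) (P.real B)) (min (⨅ t, U t) (⨅ t, F t)) := by
  have subset_inter (t : ι) : (⋂ s, A s) ∩ B ⊆ A t ∩ B :=
    Set.inter_subset_inter_left B (Set.iInter_subset A t)
  have subset_iInter_ne (t : ι) : (⋂ s, A s) ∩ B ⊆ ⋂ s ≠ t, A s := by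
    rw [← iInter_ne_inter_inter A B t]
    exact Set.inter_subset_left
  constructor
  · refine max_le (max_le measureReal_nonneg ?_) (ciSup_le fun t => ?_)
    · have joint := measureReal_add_le_inter_add_univ (.iInter hA) B
      have bonferroni := sum_measureReal_add_univ_le_iInter hA
      rw [probReal_univ] at joint bonferroni
      linarith
    · have split := measureReal_add_le_inter_add_univ
        (.iInter fun s => .iInter fun _ : s ≠ t => hA s) (A t ∩ B)
      rw [iInter_ne_inter_inter, probReal_univ] at split
      linarith [hL t, hE t]
  · refine le_min (le_min (le_ciInf fun t => ?_) ?_)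
      (le_min (le_ciInf fun t => ?_) (le_ciInf fun t => ?_))
    · exact measureReal_mono ((subset_inter t).trans Set.inter_subset_left)
    · exact measureReal_mono Set.inter_subset_right
    · exact (measureReal_mono (subset_iInter_ne t)).trans (hU t)
    · exact (measureReal_mono (subset_inter t)).trans (hF t)

/-- Theorem 6: bounds for `P(y_{i_1}_{x_{j_1}}, …, y_{i_k}_{x_{j_k}}, x_p)`. -/
theorem bounds_multi_xp
    {Ω : Type*} [MeasurableSpace Ω] (P : Measure Ω) [IsProbabilityMeasure P]
    {m n : ℕ} (hm : 0 < m) (hn : 0 < n)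
    (X : Ω → Fin m) (Y : Ω → Fin n) (Yp : Fin m → Ω → Fin n)
    (hX : Measurable X) (hY : Measurable Y) (hYp : ∀ j, Measurable (Yp j))
    (hconsist : ∀ ω, Y ω = Yp (X ω) ω)
    {k : ℕ} (hk : 1 ≤ k) (j : Fin k → Fin m) (hj : Function.Injective j)
    (i : Fin k → Fin n) (p₀ : Fin m) (hp₀ : p₀ ∉ Set.range j)
    (L U E F : Fin k → ℝ)
    (hL : ∀ t, L t ≤ pr P {ω | ∀ s, s ≠ t → Yp (j s) ω = i s})
    (hU : ∀ t, pr P {ω | ∀ s, s ≠ t → Yp (j s) ω = i s} ≤ U t)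
    (hE : ∀ t, E t ≤ pr P {ω | Yp (j t) ω = i t ∧ X ω = p₀})
    (hF : ∀ t, pr P {ω | Yp (j t) ω = i t ∧ X ω = p₀} ≤ F t) :
    max (max 0 ((∑ t, pr P {ω | Yp (j t) ω = i t}) + pr P {ω | X ω = p₀} - (k : ℝ)))
        (⨆ t, (L t + E t - 1))
      ≤ pr P {ω | (∀ t, Yp (j t) ω = i t) ∧ X ω = p₀} ∧
    pr P {ω | (∀ t, Yp (j t) ω = i t) ∧ X ω = p₀}
      ≤ min (min (⨅ t, pr P {ω | Yp (j t) ω = i t}) (pr P {ω | X ω = p₀}))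
            (min (⨅ t, U t) (⨅ t, F t)) := by
  have : Nonempty (Fin k) := Fin.pos_iff_nonempty.mp hk
  simp only [pr, ← measureReal_def, Set.ofPred_forall, Set.ofPred_and] at hL hU hE hF ⊢
  simpa only [Fintype.card_fin] using bounds_multi_xp_general P
    (A := fun t => {ω | Yp (j t) ω = i t})
    (fun t => (hYp (j t) (measurableSet_singleton (i t))).nullMeasurableSet) _ hL hU hE hF
end

section
/- Let k ≥ 1, let j : Fin k → Fin m be injective, i : Fin k → Fin n, let p₀ : Fin m lie outside the range of j, and let q : Fin n; write J for the event ⋂_{t : Fin k} {Yp (j t) = i t}. Suppose real numbers are given such that for each t : Fin k, L t ≤ P(⋂_{s ≠ t} {Yp (j s) = i s}) ≤ U t and K t ≤ P(Yp (j t) = i t ∧ X = p₀ ∧ Y = q) ≤ M t. Then max{ 0, (Σ_t P(Yp (j t) = i t)) + P(X = p₀ ∧ Y = q) − k, max_t (L t + K t − 1) } ≤ P(J ∧ X = p₀ ∧ Y = q) ≤ min{ min_t P(Yp (j t) = i t), P(X = p₀ ∧ Y = q), min_t U t, min_t M t }. (This is Theorem 8 of the paper, bounding P(y_{i_1}_{x_{j_1}},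 …, y_{i_k}_{x_{j_k}}, x_p, y_q).) -/
open MeasureTheory

/-!
Both lower bounds come from Fréchet's inequality `P(A) + P(B) - 1 ≤ P(A ∩ B)`: the one with the sum
by splitting off one event `{Yp (j t) = i t}` at a time, the one with `L t + K t - 1` by writing
the event to be bounded as the intersection of `⋂ s ≠ t, {Yp (j s) = i s}` and
`{Yp (j t) = i t, X = p₀, Y = q}`. The upper bounds are monotonicity of `P`.
-/

theorem pr_eq_measureReal {Ω : Type*} [MeasurableSpace Ω] (P : Measure Ω) (A : Set Ω) :
    pr P A = P.real A :=
  rfl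

section Frechet

variable {Ω ι : Type*} [MeasurableSpace Ω]

theorem measureReal_add_sub_univ_le_inter (μ : Measure Ω) [IsFiniteMeasure μ] {A : Set Ω}
    (hA : NullMeasurableSet A μ) (B : Set Ω) :
    μ.real A + μ.real B - μ.real Set.univ ≤ μ.real (A ∩ B) := by
  have h_union : μ.real (A ∪ B) ≤ μ.real Set.univ := measureReal_mono (Set.subset_univ _)
  linarith [measureReal_union_add_inter₀' (s := A) (t := B) hA]

theorem sum_measureReal_add_sub_card_mul_univ_le_biInter_inter (μ : Measure Ω) [IsFiniteMeasure μ]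
    (S : Finset ι) {A : ι → Set Ω} (hA : ∀ t ∈ S, NullMeasurableSet (A t) μ) (B : Set Ω) :
    ∑ t ∈ S, μ.real (A t) + μ.real B - S.card * μ.real Set.univ
      ≤ μ.real ((⋂ t ∈ S, A t) ∩ B) := by
  classical
  induction S using Finset.induction_on with
  | empty => simp
  | insert a S ha ih =>
    have ih := ih fun t ht => hA t (Finset.mem_insert_of_mem ht)
    have h_frechet := measureReal_add_sub_univ_le_inter μ (hA a (Finset.mem_insert_self a S))
      ((⋂ t ∈ S, A t) ∩ B)
    rw [Finset.set_biInter_insert, Set.inter_assoc, Finset.sum_insert ha,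
      Finset.card_insert_of_notMem ha]
    push_cast
    linarith

theorem measureReal_iInter_ne_add_sub_univ_le_iInter_inter [Countable ι] (μ : Measure Ω)
    [IsFiniteMeasure μ] {A : ι → Set Ω} (t : ι) (hA : ∀ s ≠ t, NullMeasurableSet (A s) μ)
    (B : Set Ω) :
    μ.real (⋂ s ≠ t, A s) + μ.real (A t ∩ B) - μ.real Set.univ ≤ μ.real ((⋂ s, A s) ∩ B) := by
  have h_meas : NullMeasurableSet (⋂ s ≠ t, A s) μ :=
    .iInter fun s => .iInter fun hs => hA s hs
  rw [← iInter_ne_inter_inter A B t]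
  exact measureReal_add_sub_univ_le_inter μ h_meas (A t ∩ B)

theorem bounds_multi_xp_yq_general [Fintype ι] [Nonempty ι] (P : Measure Ω)
    [IsProbabilityMeasure P] {A : ι → Set Ω} (hA : ∀ t, NullMeasurableSet (A t) P) (B : Set Ω)
    {L U K M : ι → ℝ}
    (hL : ∀ t, L t ≤ P.real (⋂ s ≠ t, A s)) (hU : ∀ t, P.real (⋂ s ≠ t, A s) ≤ U t)
    (hK : ∀ t, K t ≤ P.real (A t ∩ B)) (hM : ∀ t, P.real (A t ∩ B) ≤ M t) :
    max (max 0 (∑ t, P.real (A t) + P.real B - Fintype.card ι)) (⨆ t, (L t + K t - 1))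
      ≤ P.real ((⋂ t, A t) ∩ B) ∧
    P.real ((⋂ t, A t) ∩ B)
      ≤ min (min (⨅ t, P.real (A t)) (P.real B)) (min (⨅ t, U t) (⨅ t, M t)) := by
  have h_inter_subset (t : ι) : (⋂ s, A s) ∩ B ⊆ A t ∩ B :=
    Set.inter_subset_inter_left B (Set.iInter_subset A t)
  have h_sum : ∑ t, P.real (A t) + P.real B - Fintype.card ι ≤ P.real ((⋂ t, A t) ∩ B) := by
    simpa using
      sum_measureReal_add_sub_card_mul_univ_le_biInter_inter P Finset.univ (fun t _ => hA t) B
  have h_split (t : ι) : L t + K t - 1 ≤ P.real ((⋂ s, A s) ∩ B) := by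
    have h := measureReal_iInter_ne_add_sub_univ_le_iInter_inter P t (fun s _ => hA s) B
    rw [probReal_univ] at h
    linarith [hL t, hK t]
  have h_le_ne (t : ι) : P.real ((⋂ s, A s) ∩ B) ≤ P.real (⋂ s ≠ t, A s) :=
    measureReal_mono (Set.inter_subset_left.trans (Set.iInter_subset_iInter₂ (fun s => s ≠ t) A))
  exact ⟨max_le (max_le measureReal_nonneg h_sum) (ciSup_le h_split),
    le_min
      (le_min (le_ciInf fun t => measureReal_mono ((h_inter_subset t).trans Set.inter_subset_left))
        (measureReal_mono Set.inter_subset_right))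
      (le_min (le_ciInf fun t => (h_le_ne t).trans (hU t))
        (le_ciInf fun t => (measureReal_mono (h_inter_subset t)).trans (hM t)))⟩

end Frechet

/-- Theorem 8: bounds for `P(y_{i_1}_{x_{j_1}}, …, y_{i_k}_{x_{j_k}}, x_p, y_q)`. -/
theorem bounds_multi_xp_yq
    {Ω : Type*} [MeasurableSpace Ω] (P : Measure Ω) [IsProbabilityMeasure P]
    {m n : ℕ} (hm : 0 < m) (hn : 0 < n)
    (X : Ω → Fin m) (Y : Ω → Fin n) (Yp : Fin m → Ω → Fin n)
    (hX : Measurable X) (hY : Measurable Y) (hYp : ∀ j, Measurable (Yp j))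
    (hconsist : ∀ ω, Y ω = Yp (X ω) ω)
    {k : ℕ} (hk : 1 ≤ k) (j : Fin k → Fin m) (hj : Function.Injective j)
    (i : Fin k → Fin n) (p₀ : Fin m) (hp₀ : p₀ ∉ Set.range j) (q : Fin n)
    (L U K M : Fin k → ℝ)
    (hL : ∀ t, L t ≤ pr P {ω | ∀ s, s ≠ t → Yp (j s) ω = i s})
    (hU : ∀ t, pr P {ω | ∀ s, s ≠ t → Yp (j s) ω = i s} ≤ U t)
    (hK : ∀ t, K t ≤ pr P {ω | Yp (j t) ω = i t ∧ X ω = p₀ ∧ Y ω = q})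
    (hM : ∀ t, pr P {ω | Yp (j t) ω = i t ∧ X ω = p₀ ∧ Y ω = q} ≤ M t) :
    max (max 0 ((∑ t, pr P {ω | Yp (j t) ω = i t})
                  + pr P {ω | X ω = p₀ ∧ Y ω = q} - (k : ℝ)))
        (⨆ t, (L t + K t - 1))
      ≤ pr P {ω | (∀ t, Yp (j t) ω = i t) ∧ X ω = p₀ ∧ Y ω = q} ∧
    pr P {ω | (∀ t, Yp (j t) ω = i t) ∧ X ω = p₀ ∧ Y ω = q}
      ≤ min (min (⨅ t, pr P {ω | Yp (j t) ω = i t}) (pr P {ω | X ω = p₀ ∧ Y ω = q}))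
            (min (⨅ t, U t) (⨅ t, M t)) := by
  have : Nonempty (Fin k) := ⟨⟨0, hk⟩⟩
  simp only [pr_eq_measureReal, Set.ofPred_forall, Set.ofPred_and] at hL hU hK hM ⊢
  simpa only [Fintype.card_fin] using bounds_multi_xp_yq_general P
    (A := fun t => {ω | Yp (j t) ω = i t})
    (fun t => (hYp (j t) (measurableSet_singleton (i t))).nullMeasurableSet) _ hL hU hK hM
end

section
/- Let k ≥ 1, let j : Fin k → Fin m be injective and i : Fin k → Fin n, and write J for the event ⋂_{t : Fin k} {Yp (j t) = i t}. Then P(J) = Σ_{r : Fin k} P((⋂_{s ≠ r} {Yp (j s) = i s}) ∧ X = j r ∧ Y = i r) + Σ_{p ∉ range j} P(J ∧ X = p); that is, partitioning the joint counterfactual event by the observed treatment value, each piece with X = j r reduces (by consistency) to an event involving one fewer hypothetical term together with the observation X = j r, Y = i r. (This is the decomposition identity underlying Theorem 5.) -/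
open MeasureTheory

section

variable {Ω α β ι : Type*}

lemma forall_ne_and_eq_and_eq_iff_of_consistency {x : α} {y : β} {u : α → β} (hy : y = u x)
    (j : ι → α) (i : ι → β) (r : ι) :
    ((∀ s, s ≠ r → u (j s) = i s) ∧ x = j r ∧ y = i r) ↔ (∀ t, u (j t) = i t) ∧ x = j r := by
  rw [hy, ← and_forall_ne r (p := fun t => u (j t) = i t)]
  constructor
  · rintro ⟨hne, rfl, hr⟩
    exact ⟨⟨hr, hne⟩, rfl⟩
  · rintro ⟨⟨hr, hne⟩, rfl⟩
    exact ⟨hne, rfl, hr⟩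

variable [MeasurableSpace Ω]

lemma tsum_measure_inter_preimage_singleton (μ : Measure Ω) (A : Set Ω) {f : Ω → α}
    {T : Set α} (hT : T.Countable) (hf : ∀ a ∈ T, MeasurableSet (f ⁻¹' {a})) :
    ∑' a : T, μ (A ∩ f ⁻¹' {(a : α)}) = μ (A ∩ f ⁻¹' T) := by
  have hfT : MeasurableSet (f ⁻¹' T) := by
    rw [← Set.biUnion_preimage_singleton]
    exact .biUnion hT hf
  have h := tsum_measure_preimage_singleton (μ := μ.restrict A) hT hf
  simpa only [Measure.restrict_apply hfT, Measure.restrict_apply (hf _ (Subtype.coe_prop _)),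
    Set.inter_comm _ A] using h

theorem decomposition_multi_general [Countable α] [MeasurableSpace α] [MeasurableSingletonClass α]
    (P : Measure Ω) {X : Ω → α} {Y : Ω → β} {Yp : α → Ω → β} (hX : Measurable X)
    (hconsist : ∀ᵐ ω ∂P, Y ω = Yp (X ω) ω) {j : ι → α} (hj : Function.Injective j) (i : ι → β) :
    P {ω | ∀ t, Yp (j t) ω = i t}
      = (∑' r, P {ω | (∀ s, s ≠ r → Yp (j s) ω = i s) ∧ X ω = j r ∧ Y ω = i r})
        + ∑' p : ↥(Set.range j)ᶜ, P {ω | (∀ t, Yp (j t) ω = i t) ∧ X ω = p} := by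
  let J : Set Ω := {ω | ∀ t, Yp (j t) ω = i t}
  have sum_fibers (T : Set α) : P (J ∩ X ⁻¹' T) = ∑' p : T, P (J ∩ X ⁻¹' {(p : α)}) :=
    (tsum_measure_inter_preimage_singleton P J T.to_countable
      fun p _ => hX (measurableSet_singleton p)).symm
  have observed_piece (r : ι) :
      P (J ∩ X ⁻¹' {j r})
        = P {ω | (∀ s, s ≠ r → Yp (j s) ω = i s) ∧ X ω = j r ∧ Y ω = i r} :=
    measure_congr <| hconsist.mono fun ω hω => propext
      (forall_ne_and_eq_and_eq_iff_of_consistency (u := (Yp · ω)) hω j i r).symm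
  calc P J
      = P (J ∩ X ⁻¹' Set.range j) + P (J ∩ X ⁻¹' (Set.range j)ᶜ) :=
        (measure_inter_add_sdiff J (hX (Set.to_countable _).measurableSet)).symm
    _ = (∑' r, P (J ∩ X ⁻¹' {j r})) + ∑' p : ↥(Set.range j)ᶜ, P (J ∩ X ⁻¹' {(p : α)}) := by
        rw [sum_fibers, sum_fibers, tsum_range (fun p => P (J ∩ X ⁻¹' {p})) hj]
    _ = _ := congrArg (· + _) (tsum_congr observed_piece)

end

/-- Decomposition identity underlying Theorem 5. -/
theorem decomposition_multi
    {Ω : Type*} [MeasurableSpace Ω] (P : Measure Ω) [IsProbabilityMeasure P]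
    {m n : ℕ} (hm : 0 < m) (hn : 0 < n)
    (X : Ω → Fin m) (Y : Ω → Fin n) (Yp : Fin m → Ω → Fin n)
    (hX : Measurable X) (hY : Measurable Y) (hYp : ∀ j, Measurable (Yp j))
    (hconsist : ∀ ω, Y ω = Yp (X ω) ω)
    {k : ℕ} (hk : 1 ≤ k) (j : Fin k → Fin m) (hj : Function.Injective j)
    (i : Fin k → Fin n) :
    pr P {ω | ∀ t, Yp (j t) ω = i t}
      = (∑ r, pr P {ω | (∀ s, s ≠ r → Yp (j s) ω = i s) ∧ X ω = j r ∧ Y ω = i r})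
        + ∑ p ∈ Finset.univ.filter (fun p => ∀ t, j t ≠ p),
            pr P {ω | (∀ t, Yp (j t) ω = i t) ∧ X ω = p} := by
  rw [pr, decomposition_multi_general P hX (.of_forall hconsist) hj i,
    Finset.sum_subtype (p := (· ∈ (Set.range j)ᶜ)) (F := inferInstance) _ (by simp)]
  simp [pr, ENNReal.toReal_add, ENNReal.toReal_sum]
end

section
/- Let k ≥ 1, let j : Fin k → Fin m be injective, i : Fin k → Fin n, and q : Fin n, and write J for the event ⋂_{t : Fin k} {Yp (j t) = i t}. Then P(J ∧ Y = q) = Σ_{r : Fin k, i r = q} P((⋂_{s ≠ r} {Yp (j s) = i s}) ∧ X = j r ∧ Y = q) + Σ_{p ∉ range j} P(J ∧ X = p ∧ Y = q); in particular, the pieces with X = j r and i r ≠ q have probability zero by consistency. (This is the decomposition identity underlying Theorem 7.) -/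
open MeasureTheory

/-!
Split the event `J ∧ Y = q` along the values of `X`. On `X = j r`, consistency turns `Y = q` into
`Yp (j r) = q`. So if `i r = q` the constraint `Yp (j r) = i r` in `J` is automatic and may be
dropped, and if `i r ≠ q` that constraint fails and the piece is empty.
-/

theorem measure_eq_tsum_inter_preimage_singleton {Ω α : Type*} [MeasurableSpace Ω]
    [MeasurableSpace α] [MeasurableSingletonClass α] [Countable α] (μ : Measure Ω) {X : Ω → α}
    (hX : Measurable X) (A : Set Ω) :
    μ A = ∑' p, μ (A ∩ X ⁻¹' {p}) := by
  have hfiber (p : α) : MeasurableSet (X ⁻¹' {p}) := hX (measurableSet_singleton p)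
  calc μ A = ∑' p, μ.restrict A (X ⁻¹' {p}) := by
        rw [← tsum_univ, tsum_measure_preimage_singleton Set.countable_univ fun p _ => hfiber p,
          Set.preimage_univ, Measure.restrict_apply_univ]
    _ = ∑' p, μ (A ∩ X ⁻¹' {p}) :=
        tsum_congr fun p => by rw [Measure.restrict_apply (hfiber p), Set.inter_comm]

theorem tsum_eq_tsum_comp_add_tsum_compl_range {ι α : Type*} {j : ι → α}
    (hj : Function.Injective j) (f : α → ENNReal) :
    ∑' p, f p = ∑' r, f (j r) + ∑' p : ↥(Set.range j)ᶜ, f p := by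
  rw [← ENNReal.summable.tsum_add_tsum_compl (s := Set.range j) ENNReal.summable, tsum_range f hj]

theorem sum_pr_add_sum_pr_eq_toReal {Ω ι α : Type*} [MeasurableSpace Ω] (P : Measure Ω)
    [IsFiniteMeasure P] (s : Finset ι) (t : Finset α) (A : ι → Set Ω) (B : α → Set Ω) :
    ∑ r ∈ s, pr P (A r) + ∑ p ∈ t, pr P (B p) =
      (∑' r : (s : Set ι), P (A r) + ∑' p : (t : Set α), P (B p)).toReal := by
  have hA : ∑ r ∈ s, P (A r) ≠ ⊤ := ENNReal.sum_ne_top.2 fun _ _ => measure_ne_top _ _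
  have hB : ∑ p ∈ t, P (B p) ≠ ⊤ := ENNReal.sum_ne_top.2 fun _ _ => measure_ne_top _ _
  simp only [pr]
  rw [Finset.tsum_subtype' s fun r => P (A r), Finset.tsum_subtype' t fun p => P (B p),
    ENNReal.toReal_add hA hB, ENNReal.toReal_sum fun _ _ => measure_ne_top _ _,
    ENNReal.toReal_sum fun _ _ => measure_ne_top _ _]

section Consistency

variable {Ω α β ι : Type*} {X : Ω → α} {Y : Ω → β} {Yp : α → Ω → β}

theorem setOf_potentialOutcomes_treatment_outcome_eq_empty (hconsist : ∀ ω, Y ω = Yp (X ω) ω)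
    {j : ι → α} {i : ι → β} {q : β} {r : ι} (hr : i r ≠ q) :
    {ω | (∀ t, Yp (j t) ω = i t) ∧ X ω = j r ∧ Y ω = q} = ∅ := by
  refine Set.eq_empty_of_forall_notMem fun ω ⟨hJ, hXω, hYω⟩ => hr ?_
  rw [← hJ r, ← hXω, ← hconsist, hYω]

theorem setOf_potentialOutcomes_treatment_outcome_eq_setOf_ne (hconsist : ∀ ω, Y ω = Yp (X ω) ω)
    {j : ι → α} {i : ι → β} {q : β} {r : ι} (hr : i r = q) :
    {ω | (∀ t, Yp (j t) ω = i t) ∧ X ω = j r ∧ Y ω = q} =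
      {ω | (∀ s, s ≠ r → Yp (j s) ω = i s) ∧ X ω = j r ∧ Y ω = q} := by
  ext ω
  refine and_congr_left fun ⟨hXω, hYω⟩ => ⟨fun hJ s _ => hJ s, fun hJ s => ?_⟩
  obtain rfl | hs := eq_or_ne s r
  · rw [← hXω, ← hconsist, hYω, hr]
  · exact hJ s hs

theorem tsum_measure_potentialOutcomes_treatment_outcome [MeasurableSpace Ω] (P : Measure Ω)
    (hconsist : ∀ ω, Y ω = Yp (X ω) ω) (j : ι → α) (i : ι → β) (q : β) :
    ∑' r, P {ω | (∀ t, Yp (j t) ω = i t) ∧ X ω = j r ∧ Y ω = q} =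
      ∑' r : {r | i r = q},
        P {ω | (∀ s : ι, s ≠ r → Yp (j s) ω = i s) ∧ X ω = j r ∧ Y ω = q} := by
  have hsupport : (Function.support fun r =>
      P {ω | (∀ t, Yp (j t) ω = i t) ∧ X ω = j r ∧ Y ω = q}) ⊆ {r | i r = q} := by
    refine Function.support_subset_iff'.2 fun r hr => ?_
    rw [setOf_potentialOutcomes_treatment_outcome_eq_empty hconsist hr, measure_empty]
  rw [← tsum_subtype_eq_of_support_subset hsupport]
  exact tsum_congr fun r =>
    congrArg P (setOf_potentialOutcomes_treatment_outcome_eq_setOf_ne hconsist r.2)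

theorem decomposition_multi_yq_general [MeasurableSpace Ω] [MeasurableSpace α]
    [MeasurableSingletonClass α] [Countable α] (P : Measure Ω) (hX : Measurable X)
    (hconsist : ∀ ω, Y ω = Yp (X ω) ω) {j : ι → α} (hj : Function.Injective j)
    (i : ι → β) (q : β) :
    P {ω | (∀ t, Yp (j t) ω = i t) ∧ Y ω = q} =
      ∑' r : {r | i r = q}, P {ω | (∀ s : ι, s ≠ r → Yp (j s) ω = i s) ∧ X ω = j r ∧ Y ω = q} +
        ∑' p : ↥(Set.range j)ᶜ, P {ω | (∀ t, Yp (j t) ω = i t) ∧ X ω = p ∧ Y ω = q} := by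
  have hpiece (p : α) : {ω | (∀ t, Yp (j t) ω = i t) ∧ Y ω = q} ∩ X ⁻¹' {p} =
      {ω | (∀ t, Yp (j t) ω = i t) ∧ X ω = p ∧ Y ω = q} :=
    Set.ext fun _ => and_assoc.trans (and_congr_right' and_comm)
  simp_rw [measure_eq_tsum_inter_preimage_singleton P hX {ω | _ ∧ Y ω = q}, hpiece]
  rw [tsum_eq_tsum_comp_add_tsum_compl_range hj,
    tsum_measure_potentialOutcomes_treatment_outcome P hconsist]

end Consistency

/-- Decomposition identity underlying Theorem 7. -/
theorem decomposition_multi_yq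
    {Ω : Type*} [MeasurableSpace Ω] (P : Measure Ω) [IsProbabilityMeasure P]
    {m n : ℕ} (hm : 0 < m) (hn : 0 < n)
    (X : Ω → Fin m) (Y : Ω → Fin n) (Yp : Fin m → Ω → Fin n)
    (hX : Measurable X) (hY : Measurable Y) (hYp : ∀ j, Measurable (Yp j))
    (hconsist : ∀ ω, Y ω = Yp (X ω) ω)
    {k : ℕ} (hk : 1 ≤ k) (j : Fin k → Fin m) (hj : Function.Injective j)
    (i : Fin k → Fin n) (q : Fin n) :
    pr P {ω | (∀ t, Yp (j t) ω = i t) ∧ Y ω = q}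
      = (∑ r ∈ Finset.univ.filter (fun r => i r = q),
          pr P {ω | (∀ s, s ≠ r → Yp (j s) ω = i s) ∧ X ω = j r ∧ Y ω = q})
        + ∑ p ∈ Finset.univ.filter (fun p => ∀ t, j t ≠ p),
            pr P {ω | (∀ t, Yp (j t) ω = i t) ∧ X ω = p ∧ Y ω = q} := by
  have hcompl : {p | ∀ t, j t ≠ p} = (Set.range j)ᶜ := by ext; simp
  rw [sum_pr_add_sum_pr_eq_toReal, Finset.coe_filter_univ, Finset.coe_filter_univ, hcompl,
    ← decomposition_multi_yq_general P hX hconsist hj, pr]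
end

section
/- (Binary probability of necessity, as a special case of Theorem 4.) Take m = n = 2, with treatment values x = 0, x' = 1 and outcome values y = 0, y' = 1, and suppose P(X = x ∧ Y = y) > 0. Then the probability of necessity PN := P(Yp x' = y' | X = x ∧ Y = y) satisfies max{ 0, (P(Y = y) − P(Yp x' = y)) / P(X = x ∧ Y = y) } ≤ PN ≤ min{ 1, (P(Yp x' = y') − P(X = x' ∧ Y = y')) / P(X = x ∧ Y = y) }, where the conditional probability is P(Yp x' = y' ∧ X = x ∧ Y = y) / P(X = x ∧ Y = y). -/
open MeasureTheory

/-!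
Let `T` be the counterfactual event that the outcome under `x'` lies in `t`. By consistency `T` is
observed on `C = {X = x'}`, while evidence `E` incompatible with the treatment `x'` lies outside
`C`. Hence `T ∩ E` is disjoint from the observed part `C ∩ T` of `T`, which gives the upper bound.
Likewise whatever of `E` is not in `T` lies, together with `C \ T`, in the complement of `T`, which
gives the lower bound. For binary variables and `E = {X = 0, Y = 0}`, the event `E ∪ C \ T` is
`{Y = 0}`.
-/

section CounterfactualEvent

variable {Ω : Type*} [MeasurableSpace Ω] {μ : Measure Ω} [IsFiniteMeasure μ] {C E T : Set Ω}

theorem measureReal_union_sdiff_sub_compl_le_inter :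
    μ.real (E ∪ C \ T) - μ.real Tᶜ ≤ μ.real (T ∩ E) := by
  have hcover : E ∪ C \ T ⊆ T ∩ E ∪ Tᶜ := by
    rintro ω (hE | ⟨-, hT⟩)
    · exact (em (ω ∈ T)).imp (⟨·, hE⟩) id
    · exact Or.inr hT
  rw [sub_le_iff_le_add]
  exact (measureReal_mono hcover).trans (measureReal_union_le _ _)

theorem measureReal_inter_le_sub_inter (hC : MeasurableSet C) (hEC : Disjoint E C) :
    μ.real (T ∩ E) ≤ μ.real T - μ.real (C ∩ T) := by
  calc μ.real (T ∩ E) ≤ μ.real (T \ C) :=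
        measureReal_mono fun _ h ↦ ⟨h.1, hEC.notMem_of_mem_left h.2⟩
    _ = μ.real T - μ.real (C ∩ T) := by
        rw [Set.inter_comm, eq_sub_iff_add_eq', measureReal_inter_add_sdiff hC]

theorem measureReal_inter_div_bounds (hC : MeasurableSet C) (hEC : Disjoint E C)
    (hE : 0 < μ.real E) :
    max 0 ((μ.real (E ∪ C \ T) - μ.real Tᶜ) / μ.real E) ≤ μ.real (T ∩ E) / μ.real E ∧
      μ.real (T ∩ E) / μ.real E ≤ min 1 ((μ.real T - μ.real (C ∩ T)) / μ.real E) := by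
  refine ⟨max_le (by positivity) ?_, le_min ((div_le_one hE).2 ?_) ?_⟩
  · exact div_le_div_of_nonneg_right measureReal_union_sdiff_sub_compl_le_inter hE.le
  · exact measureReal_mono Set.inter_subset_right
  · exact div_le_div_of_nonneg_right (measureReal_inter_le_sub_inter hC hEC) hE.le

end CounterfactualEvent

section PotentialOutcomes

variable {Ω α β : Type*} {X : Ω → α} {Y : Ω → β} {Yp : α → Ω → β}

theorem ofPred_treatment_and_outcome_mem (hconsist : ∀ ω, Y ω = Yp (X ω) ω) (x : α) (t : Set β) :
    {ω | X ω = x ∧ Y ω ∈ t} = X ⁻¹' {x} ∩ Yp x ⁻¹' t := by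
  ext ω
  refine and_congr_right fun hx ↦ ?_
  rw [hconsist, hx, Set.mem_preimage]

theorem pn_bounds_general [MeasurableSpace Ω] (P : Measure Ω) [IsFiniteMeasure P]
    (hconsist : ∀ ω, Y ω = Yp (X ω) ω) {x' : α} (hX : MeasurableSet (X ⁻¹' {x'})) (t : Set β)
    {E : Set Ω} (hE : ∀ ω ∈ E, X ω ≠ x') (hpos : 0 < pr P E) :
    max 0 ((pr P (E ∪ {ω | X ω = x' ∧ Y ω ∉ t}) - pr P {ω | Yp x' ω ∉ t}) / pr P E)
      ≤ pr P ({ω | Yp x' ω ∈ t} ∩ E) / pr P E ∧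
    pr P ({ω | Yp x' ω ∈ t} ∩ E) / pr P E
      ≤ min 1 ((pr P {ω | Yp x' ω ∈ t} - pr P {ω | X ω = x' ∧ Y ω ∈ t}) / pr P E) := by
  have hcompl : {ω | X ω = x' ∧ Y ω ∉ t} = X ⁻¹' {x'} \ Yp x' ⁻¹' t :=
    ofPred_treatment_and_outcome_mem hconsist x' tᶜ
  rw [hcompl, ofPred_treatment_and_outcome_mem hconsist]
  exact measureReal_inter_div_bounds hX (Set.disjoint_left.2 hE) hpos

end PotentialOutcomes

section BinaryEvents

variable {Ω : Type*}

theorem ofPred_notMem_singleton_one (f : Ω → Fin 2) :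
    {ω | f ω ∉ ({1} : Set (Fin 2))} = {ω | f ω = 0} := by
  ext ω
  simp only [Set.mem_ofPred_eq, Set.mem_singleton_iff]
  omega

theorem ofPred_eq_zero_and_union_eq_one_and (X Y : Ω → Fin 2) :
    {ω | X ω = 0 ∧ Y ω = 0} ∪ {ω | X ω = 1 ∧ Y ω ∉ ({1} : Set (Fin 2))} = {ω | Y ω = 0} := by
  ext ω
  simp only [Set.mem_union, Set.mem_ofPred_eq, Set.mem_singleton_iff]
  omega

end BinaryEvents

/-- Tian–Pearl bounds for the binary probability of necessity (PN),
with `x = 0`, `x' = 1`, `y = 0`, `y' = 1`. -/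
theorem pn_bounds
    {Ω : Type*} [MeasurableSpace Ω] (P : Measure Ω) [IsProbabilityMeasure P]
    (X : Ω → Fin 2) (Y : Ω → Fin 2) (Yp : Fin 2 → Ω → Fin 2)
    (hX : Measurable X) (hY : Measurable Y) (hYp : ∀ j, Measurable (Yp j))
    (hconsist : ∀ ω, Y ω = Yp (X ω) ω)
    (hpos : 0 < pr P {ω | X ω = 0 ∧ Y ω = 0}) :
    max 0 ((pr P {ω | Y ω = 0} - pr P {ω | Yp 1 ω = 0})
            / pr P {ω | X ω = 0 ∧ Y ω = 0})
      ≤ pr P {ω | Yp 1 ω = 1 ∧ X ω = 0 ∧ Y ω = 0} / pr P {ω | X ω = 0 ∧ Y ω = 0} ∧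
    pr P {ω | Yp 1 ω = 1 ∧ X ω = 0 ∧ Y ω = 0} / pr P {ω | X ω = 0 ∧ Y ω = 0}
      ≤ min 1 ((pr P {ω | Yp 1 ω = 1} - pr P {ω | X ω = 1 ∧ Y ω = 1})
                / pr P {ω | X ω = 0 ∧ Y ω = 0}) := by
  rw [← ofPred_eq_zero_and_union_eq_one_and X Y, ← ofPred_notMem_singleton_one (Yp 1)]
  exact pn_bounds_general P hconsist (hX (measurableSet_singleton 1)) {1} (by simp +contextual) hpos
end

section
/- (Tian–Pearl PNS bounds, as a special case of Theorem 5.) Take m = n = 2, with treatment values x = 0, x' = 1 and outcome values y = 0, y' = 1. Then the probability of necessity and sufficiency PNS := P(Yp x = y ∧ Yp x' = y') satisfies max{ 0, P(Yp x = y) − P(Yp x' = y), P(Y = y) − P(Yp x' = y), P(Yp x = y) − P(Y = y) } ≤ PNS ≤ min{ P(Yp x = y), P(Yp x' = y'), P(X = x ∧ Y = y) + P(X = x' ∧ Y = y'), P(Yp x = y) − P(Yp x' = y) + P(X = x ∧ Y = y') + P(X = x' ∧ Y = y) }. -/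
open MeasureTheory

/-!
The PNS event is the difference `A \ B` of the events `A = {Yp x ∈ S}` and `B = {Yp x' ∈ S}`.
By consistency `E = {Y ∈ S}` satisfies `A ∩ B ⊆ E ⊆ A ∪ B`, so `E \ B` and `A \ E` lie in `A \ B`;
this gives the lower bounds. Splitting by the treatment received bounds `A \ B`, and likewise
`B \ A`, by observed cells; since `P (A \ B) - P (B \ A) = P A - P B`, the bound on `B \ A` yields
the last upper bound.
-/

section MeasureDifference

variable {Ω : Type*} [MeasurableSpace Ω] {μ : Measure Ω} {s t u : Set Ω}

theorem measureReal_sub_le_of_sdiff_subset (h : s \ t ⊆ u) (ht : μ t ≠ ⊤ := by finiteness)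
    (hu : μ u ≠ ⊤ := by finiteness) : μ.real s - μ.real t ≤ μ.real u :=
  (le_measureReal_sdiff ht).trans (measureReal_mono h hu)

theorem measureReal_sdiff_sub_measureReal_sdiff (hs : NullMeasurableSet s μ)
    (ht : NullMeasurableSet t μ) (hs_fin : μ s ≠ ⊤ := by finiteness)
    (ht_fin : μ t ≠ ⊤ := by finiteness) :
    μ.real (s \ t) - μ.real (t \ s) = μ.real s - μ.real t := by
  rw [← measureReal_inter_add_sdiff₀ ht hs_fin, ← measureReal_inter_add_sdiff₀ hs ht_fin,
    Set.inter_comm t s]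
  ring

end MeasureDifference

section PotentialOutcomes

variable {Ω ι γ : Type*} {X : Ω → ι} {Y : Ω → γ} {Yp : ι → Ω → γ} {x x' : ι}

theorem observed_eq_or_eq (hconsist : ∀ ω, Y ω = Yp (X ω) ω)
    (hX : ∀ ω, X ω = x ∨ X ω = x') (ω : Ω) : Y ω = Yp x ω ∨ Y ω = Yp x' ω :=
  (hX ω).imp (fun h => by rw [hconsist, h]) (fun h => by rw [hconsist, h])

theorem observed_sdiff_potential_subset (hY : ∀ ω, Y ω = Yp x ω ∨ Y ω = Yp x' ω) (S : Set γ) :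
    {ω | Y ω ∈ S} \ {ω | Yp x' ω ∈ S} ⊆ {ω | Yp x ω ∈ S ∧ Yp x' ω ∉ S} := by
  rintro ω ⟨hE : Y ω ∈ S, hB : Yp x' ω ∉ S⟩
  rcases hY ω with h | h
  · exact ⟨h ▸ hE, hB⟩
  · exact absurd (h ▸ hE) hB

theorem potential_sdiff_observed_subset (hY : ∀ ω, Y ω = Yp x ω ∨ Y ω = Yp x' ω) (S : Set γ) :
    {ω | Yp x ω ∈ S} \ {ω | Y ω ∈ S} ⊆ {ω | Yp x ω ∈ S ∧ Yp x' ω ∉ S} := by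
  rintro ω ⟨hA : Yp x ω ∈ S, hE : Y ω ∉ S⟩
  rcases hY ω with h | h
  · exact absurd hA (h ▸ hE)
  · exact ⟨hA, h ▸ hE⟩

theorem potential_sdiff_subset_observed (hconsist : ∀ ω, Y ω = Yp (X ω) ω)
    (hX : ∀ ω, X ω = x ∨ X ω = x') (S : Set γ) :
    {ω | Yp x ω ∈ S ∧ Yp x' ω ∉ S} ⊆ {ω | X ω = x ∧ Y ω ∈ S} ∪ {ω | X ω = x' ∧ Y ω ∉ S} := by
  rintro ω ⟨hx, hx'⟩
  rcases hX ω with h | h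
  · exact Or.inl ⟨h, by rwa [hconsist, h]⟩
  · exact Or.inr ⟨h, by rwa [hconsist, h]⟩

variable [MeasurableSpace Ω] (P : Measure Ω) [IsFiniteMeasure P]

theorem pr_pns_le_observed (hconsist : ∀ ω, Y ω = Yp (X ω) ω)
    (hX : ∀ ω, X ω = x ∨ X ω = x') (S : Set γ) :
    pr P {ω | Yp x ω ∈ S ∧ Yp x' ω ∉ S}
      ≤ pr P {ω | X ω = x ∧ Y ω ∈ S} + pr P {ω | X ω = x' ∧ Y ω ∉ S} :=
  (measureReal_mono (potential_sdiff_subset_observed hconsist hX S)).trans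
    (measureReal_union_le _ _)

theorem pns_bounds_general (hconsist : ∀ ω, Y ω = Yp (X ω) ω)
    (hX : ∀ ω, X ω = x ∨ X ω = x') (S : Set γ)
    (hS : NullMeasurableSet {ω | Yp x ω ∈ S} P) (hS' : NullMeasurableSet {ω | Yp x' ω ∈ S} P) :
    max (max 0 (pr P {ω | Yp x ω ∈ S} - pr P {ω | Yp x' ω ∈ S}))
        (max (pr P {ω | Y ω ∈ S} - pr P {ω | Yp x' ω ∈ S})
             (pr P {ω | Yp x ω ∈ S} - pr P {ω | Y ω ∈ S}))
      ≤ pr P {ω | Yp x ω ∈ S ∧ Yp x' ω ∉ S} ∧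
    pr P {ω | Yp x ω ∈ S ∧ Yp x' ω ∉ S}
      ≤ min (min (pr P {ω | Yp x ω ∈ S}) (pr P {ω | Yp x' ω ∉ S}))
            (min (pr P {ω | X ω = x ∧ Y ω ∈ S} + pr P {ω | X ω = x' ∧ Y ω ∉ S})
                 (pr P {ω | Yp x ω ∈ S} - pr P {ω | Yp x' ω ∈ S}
                   + pr P {ω | X ω = x ∧ Y ω ∉ S} + pr P {ω | X ω = x' ∧ Y ω ∈ S})) := by
  have hY := observed_eq_or_eq hconsist hX
  have reversed := pr_pns_le_observed P hconsist (fun ω => (hX ω).symm) S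
  have balance : pr P {ω | Yp x ω ∈ S ∧ Yp x' ω ∉ S} - pr P {ω | Yp x' ω ∈ S ∧ Yp x ω ∉ S}
      = pr P {ω | Yp x ω ∈ S} - pr P {ω | Yp x' ω ∈ S} :=
    measureReal_sdiff_sub_measureReal_sdiff hS hS'
  refine ⟨max_le (max_le measureReal_nonneg (measureReal_sub_le_of_sdiff_subset subset_rfl))
      (max_le (measureReal_sub_le_of_sdiff_subset (observed_sdiff_potential_subset hY S))
        (measureReal_sub_le_of_sdiff_subset (potential_sdiff_observed_subset hY S))),
    le_min (le_min (measureReal_mono fun _ h => h.1) (measureReal_mono fun _ h => h.2))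
      (le_min (pr_pns_le_observed P hconsist hX S) ?_)⟩
  linarith

end PotentialOutcomes

/-- Tian–Pearl bounds for the binary probability of necessity and sufficiency (PNS),
with `x = 0`, `x' = 1`, `y = 0`, `y' = 1`. -/
theorem pns_bounds
    {Ω : Type*} [MeasurableSpace Ω] (P : Measure Ω) [IsProbabilityMeasure P]
    (X : Ω → Fin 2) (Y : Ω → Fin 2) (Yp : Fin 2 → Ω → Fin 2)
    (hX : Measurable X) (hY : Measurable Y) (hYp : ∀ j, Measurable (Yp j))
    (hconsist : ∀ ω, Y ω = Yp (X ω) ω) :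
    max (max 0 (pr P {ω | Yp 0 ω = 0} - pr P {ω | Yp 1 ω = 0}))
        (max (pr P {ω | Y ω = 0} - pr P {ω | Yp 1 ω = 0})
             (pr P {ω | Yp 0 ω = 0} - pr P {ω | Y ω = 0}))
      ≤ pr P {ω | Yp 0 ω = 0 ∧ Yp 1 ω = 1} ∧
    pr P {ω | Yp 0 ω = 0 ∧ Yp 1 ω = 1}
      ≤ min (min (pr P {ω | Yp 0 ω = 0}) (pr P {ω | Yp 1 ω = 1}))
            (min (pr P {ω | X ω = 0 ∧ Y ω = 0} + pr P {ω | X ω = 1 ∧ Y ω = 1})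
                 (pr P {ω | Yp 0 ω = 0} - pr P {ω | Yp 1 ω = 0}
                   + pr P {ω | X ω = 0 ∧ Y ω = 1} + pr P {ω | X ω = 1 ∧ Y ω = 0})) := by
  have hne (i : Fin 2) : ¬i = 0 ↔ i = 1 := by lia
  have hS (j : Fin 2) := (hYp j (measurableSet_singleton 0)).nullMeasurableSet (μ := P)
  simpa [hne] using
    pns_bounds_general P hconsist (fun ω => show X ω = 0 ∨ X ω = 1 by lia) {0} (hS 0) (hS 1)
end
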